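/- Case 4 of the meeting-point analysis: in a rooted tree, assume dist(v,q) ≤ dist(u,q), q is not an ancestor of u, u is not an ancestor of q, and the lowest common ancestor of v and q is not an ancestor of u. Then the median of u, v, q equals the lowest common ancestor of v and q. -/

import Mathlib

/-- `m` lies on the path from `a` to `b` in the graph `G`. -/
def onPath {V : Type*} (G : SimpleGraph V) (a m b : V) : Prop :=
  G.dist a m + G.dist m b = G.dist a b

/-- `m` is a median of the vertices `u`, `v`, `w`: it lies on the path from `u` to `v`,
on the path from `u` to `w`, and on the path from `v` to `w`. -/
def isMedian {V : Type*} (G : SimpleGraph V) (m u v w : V) : Prop :=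
  onPath G u m v ∧ onPath G u m w ∧ onPath G v m w

/-- `u` is an ancestor of `v` with respect to the root `r`:
`u` lies on the path from `r` to `v`. -/
def isAncestor {V : Type*} (G : SimpleGraph V) (r u v : V) : Prop :=
  onPath G r u v

/-- `l` is a lowest common ancestor of `u` and `v` with respect to the root `r`. -/
def isLCA {V : Type*} (G : SimpleGraph V) (r l u v : V) : Prop :=
  isAncestor G r l u ∧ isAncestor G r l v ∧
    ∀ a : V, isAncestor G r a u → isAncestor G r a v → isAncestor G r a l

/-!
The lowest common ancestor `l` of `v` and `q` is the branching point of the paths from the root `r`,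
that is, the median of `r`, `v`, `q`. In a tree, if `m` lies between `a` and `b`, then for every
vertex `x` it lies between `a` and `x` or between `x` and `b`. Hence, as `l` is not on the path
from `r` to `u`, the root can be replaced by `u`: `l` is a median of `u`, `v`, `q`. The distances
from a median to the three vertices are determined by their pairwise distances, and a point of a
path is determined by its distance to an end, so medians in a tree are unique.
-/

section

variable {V : Type*} {G : SimpleGraph V}

lemma length_eq_dist_of_isPath (hG : G.IsAcyclic) {a b : V} {p : G.Walk a b} (hp : p.IsPath) :
    p.length = G.dist a b := by
  obtain ⟨p', hp', hlen⟩ := p.reachable.exists_path_of_dist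
  obtain rfl : p = p' := Subtype.mk.inj ((hG.subsingleton_path a b).elim ⟨p, hp⟩ ⟨p', hp'⟩)
  exact hlen

lemma mem_support_iff_onPath (hG : G.IsTree) {a b x : V} {p : G.Walk a b} (hp : p.IsPath) :
    x ∈ p.support ↔ onPath G a x b := by
  constructor
  · intro hx
    obtain ⟨s, t, hs, ht, rfl⟩ := hp.mem_support_iff_exists_append.mp hx
    rw [onPath, ← length_eq_dist_of_isPath hG.isAcyclic hs,
      ← length_eq_dist_of_isPath hG.isAcyclic ht, ← length_eq_dist_of_isPath hG.isAcyclic hp,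
      SimpleGraph.Walk.length_append]
  · intro hx
    obtain ⟨s, hs⟩ := hG.connected.exists_walk_length_eq_dist a x
    obtain ⟨t, ht⟩ := hG.connected.exists_walk_length_eq_dist x b
    have hst : (s.append t).IsPath := by
      apply SimpleGraph.Walk.isPath_of_length_eq_dist
      rw [SimpleGraph.Walk.length_append, hs, ht, hx]
    rw [(hG.existsUnique_path a b).unique hp hst, SimpleGraph.Walk.mem_support_append_iff]
    exact Or.inl s.end_mem_support

lemma isPath_append {a m b : V} {p : G.Walk a m} {q : G.Walk m b} (hp : p.IsPath) (hq : q.IsPath)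
    (h : ∀ x ∈ p.support, x ∈ q.support → x = m) : (p.append q).IsPath := by
  have hq' : (m :: q.support.tail).Nodup := by
    rw [q.cons_tail_support]
    exact hq.support_nodup
  rw [SimpleGraph.Walk.isPath_def, SimpleGraph.Walk.support_append, List.nodup_append']
  refine ⟨hp.support_nodup, hq'.of_cons, fun x hxp hxq ↦ hq'.notMem ?_⟩
  have hxm : x = m := h x hxp (List.mem_of_mem_tail hxq)
  exact hxm ▸ hxq

namespace onPath

variable {a b m x : V}

lemma symm (h : onPath G a m b) : onPath G b m a := by
  rwa [onPath, G.dist_comm (u := b) (v := m), G.dist_comm (u := m) (v := a),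
    G.dist_comm (u := b) (v := a), add_comm]

lemma trans_right (hG : G.Connected) (hm : onPath G a m b) (hx : onPath G m x b) :
    onPath G a x b := by
  have := hG.dist_triangle (u := a) (v := m) (w := x)
  have := hG.dist_triangle (u := a) (v := x) (w := b)
  unfold onPath at *
  lia

lemma trans_right_left (hG : G.Connected) (hm : onPath G a m b) (hx : onPath G m x b) :
    onPath G a m x := by
  have := hG.dist_triangle (u := a) (v := m) (w := x)
  have := hG.dist_triangle (u := a) (v := x) (w := b)
  unfold onPath at *
  lia

lemma left_or_right (hG : G.IsTree) (h : onPath G a m b) (x : V) :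
    onPath G a m x ∨ onPath G x m b := by
  classical
  obtain ⟨s, hs, -⟩ := hG.connected.exists_path_of_dist a x
  obtain ⟨t, ht, -⟩ := hG.connected.exists_path_of_dist x b
  have hm : m ∈ (s.append t).bypass.support :=
    (mem_support_iff_onPath hG (s.append t).bypass_isPath).mpr h
  rw [← mem_support_iff_onPath hG hs, ← mem_support_iff_onPath hG ht,
    ← SimpleGraph.Walk.mem_support_append_iff]
  exact (s.append t).support_bypass_subset_support hm

lemma of_forall_eq (hG : G.IsTree) (h : ∀ x, onPath G a x m → onPath G m x b → x = m) :
    onPath G a m b := by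
  obtain ⟨p, hp, -⟩ := hG.connected.exists_path_of_dist a m
  obtain ⟨q, hq, -⟩ := hG.connected.exists_path_of_dist m b
  have hpq : (p.append q).IsPath := isPath_append hp hq fun x hxp hxq ↦
    h x ((mem_support_iff_onPath hG hp).mp hxp) ((mem_support_iff_onPath hG hq).mp hxq)
  rw [← mem_support_iff_onPath hG hpq, SimpleGraph.Walk.mem_support_append_iff]
  exact Or.inl p.end_mem_support

lemma eq_of_dist_eq (hG : G.IsTree) (hm : onPath G a m b) (hx : onPath G a x b)
    (h : G.dist a m = G.dist a x) : m = x := by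
  rw [← hG.connected.dist_eq_zero_iff]
  rcases hm.left_or_right hG x with hmx | hxm
  · unfold onPath at hmx
    lia
  · rw [G.dist_comm]
    unfold onPath at hm hx hxm
    lia

end onPath

lemma isAncestor.antisymm (hG : G.Connected) {r a b : V} (hab : isAncestor G r a b)
    (hba : isAncestor G r b a) : a = b := by
  unfold isAncestor onPath at hab hba
  rw [← hG.dist_eq_zero_iff]
  lia

namespace isMedian

variable {m u v w : V}

lemma two_mul_dist_add_dist (h : isMedian G m u v w) :
    2 * G.dist u m + G.dist v w = G.dist u v + G.dist u w := by
  obtain ⟨huv, huw, hvw⟩ := h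
  have := G.dist_comm (u := v) (v := m)
  unfold onPath at huv huw hvw
  lia

lemma unique (hG : G.IsTree) {m' : V} (h : isMedian G m u v w) (h' : isMedian G m' u v w) :
    m = m' := by
  have hdist := h.two_mul_dist_add_dist
  have hdist' := h'.two_mul_dist_add_dist
  exact h.1.eq_of_dist_eq hG h'.1 (by lia)

lemma of_not_onPath (hG : G.IsTree) (h : isMedian G m u v w) {x : V} (hx : ¬ onPath G u m x) :
    isMedian G m x v w :=
  ⟨(h.1.left_or_right hG x).resolve_left hx, (h.2.1.left_or_right hG x).resolve_left hx, h.2.2⟩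

end isMedian

lemma isLCA.isMedian_root (hG : G.IsTree) {r l v w : V} (hl : isLCA G r l v w) :
    isMedian G l r v w := by
  obtain ⟨hlv, hlw, hmax⟩ := hl
  refine ⟨hlv, hlw, onPath.of_forall_eq hG fun x hvx hxw ↦ ?_⟩
  have hxl : isAncestor G r x l :=
    hmax x (hlv.trans_right hG.connected hvx.symm) (hlw.trans_right hG.connected hxw)
  have hlx : isAncestor G r l x := hlw.trans_right_left hG.connected hxw
  exact hxl.antisymm hG.connected hlx

end

theorem median_case4_general {V : Type*} (G : SimpleGraph V) (hG : G.IsTree) (r u v q l : V)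
    (hl : isLCA G r l v q) (hlu : ¬ isAncestor G r l u) (m : V) :
    isMedian G m u v q ↔ m = l := by
  have hmed : isMedian G l u v q := (hl.isMedian_root hG).of_not_onPath hG hlu
  exact ⟨fun hm ↦ hm.unique hG hmed, fun hml ↦ hml ▸ hmed⟩

/-- Case 4: if `dist(v,q) ≤ dist(u,q)`, `q` is not an ancestor of `u`, `u` is
not an ancestor of `q`, and the LCA of `v` and `q` is not an ancestor of `u`,
then the median of `u`, `v`, `q` equals the LCA of `v` and `q`. -/
theorem median_case4 {V : Type*} [Fintype V] (G : SimpleGraph V)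
    (hG : G.IsTree) (r u v q : V)
    (hd : G.dist v q ≤ G.dist u q)
    (hqu : ¬ isAncestor G r q u) (huq : ¬ isAncestor G r u q)
    (l : V) (hl : isLCA G r l v q) (hlu : ¬ isAncestor G r l u) :
    ∀ m : V, isMedian G m u v q → m = l :=
  fun m ↦ (median_case4_general G hG r u v q l hl hlu m).mp
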